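/- Let n ≥ 3, let 0 < φ ≤ π/2 and 0 < θ < 2φ. Set ω₁ := ω(θ,φ), ψ := φ·(1 − ω₁/π), ω₂ := ω(θ,φ,ψ), and assume φ − ψ ≤ θ ≤ φ + ψ. Then for every θ-code C contained in Cap(n,φ): (i) |{x ∈ C : ψ ≤ dist(x,e) ≤ φ}| ≤ A(n−1, min(ω₁,ω₂)), and (ii) |{x ∈ C : ψ ≤ dist(x,e) ≤ φ}| + 2·|{x ∈ C : dist(x,e) < ψ}| ≤ A(n, ω₁); here A(n−1,·) refers to codes on the unit sphere S^{n−2} ⊂ ℝ^{n−1}. -/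

import Mathlib

noncomputable section

/-- The "North pole" `(0, …, 0, 1)` of the unit sphere in `ℝ^n`. -/
def north (n : ℕ) : EuclideanSpace ℝ (Fin n) :=
  if h : 0 < n then EuclideanSpace.single ⟨n - 1, Nat.sub_lt h Nat.one_pos⟩ 1 else 0

/-- Angular distance between two points: `arccos ⟨x, y⟩`. -/
def aDist {n : ℕ} (x y : EuclideanSpace ℝ (Fin n)) : ℝ := Real.arccos (inner ℝ x y : ℝ)

/-- A finite set of unit vectors with pairwise angular distance at least `θ`. -/
def IsCode {n : ℕ} (θ : ℝ) (C : Finset (EuclideanSpace ℝ (Fin n))) : Prop :=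
  (∀ x ∈ C, ‖x‖ = 1) ∧ ∀ x ∈ C, ∀ y ∈ C, x ≠ y → θ ≤ aDist x y

/-- `A(n, θ)`: maximal size of a `θ`-code on the unit sphere `S^{n-1} ⊂ ℝ^n`. -/
def sphereMax (n : ℕ) (θ : ℝ) : ℕ :=
  sSup {M | ∃ C : Finset (EuclideanSpace ℝ (Fin n)), IsCode θ C ∧ C.card = M}

/-- `A(n, θ, φ)`: maximal size of a `θ`-code in the cap of angular radius `φ` about the
North pole. -/
def capMax (n : ℕ) (θ φ : ℝ) : ℕ :=
  sSup {M | ∃ C : Finset (EuclideanSpace ℝ (Fin n)), IsCode θ C ∧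
    (∀ x ∈ C, aDist x (north n) ≤ φ) ∧ C.card = M}

/-- `A(n, θ, [ψ, φ])`: maximal size of a `θ`-code in the strip `Z(n, [ψ, φ])`. -/
def stripMax (n : ℕ) (θ ψ φ : ℝ) : ℕ :=
  sSup {M | ∃ C : Finset (EuclideanSpace ℝ (Fin n)), IsCode θ C ∧
    (∀ x ∈ C, ψ ≤ aDist x (north n) ∧ aDist x (north n) ≤ φ) ∧ C.card = M}

/-- `m(n, d)`: maximal number of points in the closed unit ball of `ℝ^n` with pairwise
Euclidean distances at least `d`. -/
def ballMax (n : ℕ) (d : ℝ) : ℕ :=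
  sSup {M | ∃ C : Finset (EuclideanSpace ℝ (Fin n)), (∀ x ∈ C, ‖x‖ ≤ 1) ∧
    (∀ x ∈ C, ∀ y ∈ C, x ≠ y → d ≤ dist x y) ∧ C.card = M}

/-- `ω(θ, α, β) = arccos((cos θ - cos α cos β) / (sin α sin β))`. -/
def omega2 (θ α β : ℝ) : ℝ :=
  Real.arccos ((Real.cos θ - Real.cos α * Real.cos β) / (Real.sin α * Real.sin β))

/-- `ω(θ, α) := ω(θ, α, α)`. -/
def omega1 (θ α : ℝ) : ℝ := omega2 θ α α

end

/-!
Write a point of the sphere in polar coordinates about the pole `e` as `cos r • e + sin r • u`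
with `u` a unit vector orthogonal to `e`. For the strip, `cos a cos b + M sin a sin b` is
quasiconcave in each variable, so its minimum over `a, b ∈ [ψ, φ]` is attained at a corner; hence
the directions `u` of two code points keep the angular distance `min ω₁ ω₂`, giving a code in the
unit sphere of `eᗮ`. For the second bound, stretch the cap onto the hemisphere by
`r ↦ π r / (2 φ)`. The ratio of the chord of two points to that of their stretched images is at
most `sin φ`, so the image is an `ω₁`-code. Points with `r < ψ` are sent to within `(π - ω₁) / 2`
of the pole, so their mirror images in the equator can be added to the code.
-/

section

open Real Set Module
open scoped RealInnerProductSpace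

theorem quasiconcaveOn_mul_cos_add_mul_sin {A : ℝ} (hA : 0 ≤ A) (B : ℝ) :
    QuasiconcaveOn ℝ (Icc 0 (π / 2)) fun t => A * cos t + B * sin t := by
  rcases le_total 0 B with hB | hB
  · have hcos : ConcaveOn ℝ (Icc 0 (π / 2)) cos :=
      strictConcaveOn_cos_Icc.concaveOn.subset
        (Icc_subset_Icc_left (by linarith [pi_pos])) (convex_Icc _ _)
    have hsin : ConcaveOn ℝ (Icc 0 (π / 2)) sin :=
      strictConcaveOn_sin_Icc.concaveOn.subset
        (Icc_subset_Icc_right (by linarith [pi_pos])) (convex_Icc _ _)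
    exact ((hcos.smul hA).add (hsin.smul hB)).quasiconcaveOn
  · refine AntitoneOn.quasiconcaveOn (fun s hs t ht hst => add_le_add ?_ ?_) (convex_Icc _ _)
    · exact mul_le_mul_of_nonneg_left
        (cos_le_cos_of_nonneg_of_le_pi hs.1 (by linarith [ht.2, pi_pos]) hst) hA
    · exact mul_le_mul_of_nonpos_left
        (sin_le_sin_of_le_of_le_pi_div_two (by linarith [hs.1, pi_pos]) ht.2 hst) hB

theorem le_mul_cos_add_mul_sin_of_mem_Icc {A B c p q t : ℝ} (hA : 0 ≤ A) (hp : 0 ≤ p)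
    (hq : q ≤ π / 2) (hcp : c ≤ A * cos p + B * sin p) (hcq : c ≤ A * cos q + B * sin q)
    (ht : t ∈ Icc p q) : c ≤ A * cos t + B * sin t := by
  have hpq : p ≤ q := ht.1.trans ht.2
  exact ((quasiconcaveOn_mul_cos_add_mul_sin hA B c).ordConnected.out
    ⟨⟨hp, hpq.trans hq⟩, hcp⟩ ⟨⟨hp.trans hpq, hq⟩, hcq⟩ ht).2

theorem le_cos_mul_cos_add_sin_mul_sin_mul_of_corners {c M ψ φ : ℝ} (hψ : 0 ≤ ψ)
    (hφ : φ ≤ π / 2) (hM : M ≤ 1) (hφφ : c ≤ cos φ * cos φ + sin φ * sin φ * M)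
    (hφψ : c ≤ cos φ * cos ψ + sin φ * sin ψ * M) {a b : ℝ} (ha : a ∈ Icc ψ φ)
    (hb : b ∈ Icc ψ φ) : c ≤ cos a * cos b + sin a * sin b * M := by
  have hψφ : ψ ≤ φ := ha.1.trans ha.2
  have cos_nonneg {t : ℝ} (ht : t ∈ Icc ψ φ) : 0 ≤ cos t :=
    cos_nonneg_of_neg_pi_div_two_le_of_le (by linarith [ht.1, pi_pos]) (ht.2.trans hφ)
  have hψψ : c ≤ cos ψ * cos ψ + sin ψ * sin ψ * M := by
    have hsin : sin ψ ^ 2 ≤ sin φ ^ 2 :=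
      pow_le_pow_left₀ (sin_nonneg_of_nonneg_of_le_pi hψ (by linarith [pi_pos]))
        (sin_le_sin_of_le_of_le_pi_div_two (by linarith [pi_pos]) hφ hψφ) 2
    have := mul_le_mul_of_nonneg_right hsin (sub_nonneg.2 hM)
    linarith [sin_sq_add_cos_sq φ, sin_sq_add_cos_sq ψ]
  have edge {s : ℝ} (hs : s ∈ Icc ψ φ) (hsψ : c ≤ cos s * cos ψ + sin s * sin ψ * M)
      (hsφ : c ≤ cos s * cos φ + sin s * sin φ * M) {t : ℝ} (ht : t ∈ Icc ψ φ) :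
      c ≤ cos s * cos t + sin s * sin t * M := by
    have := le_mul_cos_add_mul_sin_of_mem_Icc (B := sin s * M) (c := c) (cos_nonneg hs) hψ hφ
      (by linarith) (by linarith) ht
    linarith
  have haψ := edge ⟨le_rfl, hψφ⟩ hψψ (by linarith) ha
  have haφ := edge ⟨hψφ, le_rfl⟩ hφψ hφφ ha
  exact edge ha (by linarith) (by linarith) hb

theorem sin_mul_mul_cos_le {t x : ℝ} (ht₀ : 0 ≤ t) (ht₁ : t ≤ 1) (hx₀ : 0 ≤ x) (hx : x ≤ π) :
    sin (t * x) * cos x ≤ t * cos (t * x) * sin x := by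
  let f (y : ℝ) : ℝ := t * cos (t * y) * sin y - sin (t * y) * cos y
  have hf (y : ℝ) : HasDerivAt f ((1 - t ^ 2) * (sin (t * y) * sin y)) y := by
    have hty : HasDerivAt (fun y => t * y) t y := by simpa using (hasDerivAt_id y).const_mul t
    exact (((hty.cos.const_mul t).mul (hasDerivAt_sin y)).sub
      (hty.sin.mul (hasDerivAt_cos y))).congr_deriv (by ring)
  have hmono : MonotoneOn f (Icc 0 π) := by
    refine monotoneOn_of_deriv_nonneg (convex_Icc 0 π)
      (fun y _ => (hf y).continuousAt.continuousWithinAt)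
      (fun y _ => (hf y).differentiableAt.differentiableWithinAt) fun y hy => ?_
    rw [interior_Icc] at hy
    have hty : t * y ≤ y := mul_le_of_le_one_left hy.1.le ht₁
    rw [(hf y).deriv]
    exact mul_nonneg (by nlinarith) (mul_nonneg
      (sin_nonneg_of_nonneg_of_le_pi (mul_nonneg ht₀ hy.1.le) (hty.trans hy.2.le))
      (sin_nonneg_of_nonneg_of_le_pi hy.1.le hy.2.le))
  have h := hmono ⟨le_rfl, pi_pos.le⟩ ⟨hx₀, hx⟩ hx₀
  simp only [f, mul_zero, sin_zero, zero_mul, sub_zero] at h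
  linarith

theorem monotoneOn_sin_mul_div_sin {t : ℝ} (ht₀ : 0 ≤ t) (ht₁ : t ≤ 1) :
    MonotoneOn (fun x => sin (t * x) / sin x) (Ioo 0 π) := by
  have hderiv {x : ℝ} (hx : x ∈ Ioo 0 π) : HasDerivAt (fun x => sin (t * x) / sin x)
      ((t * cos (t * x) * sin x - sin (t * x) * cos x) / sin x ^ 2) x := by
    have htx : HasDerivAt (fun x => t * x) t x := by simpa using (hasDerivAt_id x).const_mul t
    exact (htx.sin.div (hasDerivAt_sin x) (sin_pos_of_mem_Ioo hx).ne').congr_deriv (by ring)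
  refine monotoneOn_of_deriv_nonneg (convex_Ioo 0 π)
    (fun x hx => (hderiv hx).continuousAt.continuousWithinAt) ?_ ?_ <;> rw [interior_Ioo]
  · exact fun x hx => (hderiv hx).differentiableAt.differentiableWithinAt
  · intro x hx
    rw [(hderiv hx).deriv]
    exact div_nonneg (sub_nonneg.2 (sin_mul_mul_cos_le ht₀ ht₁ hx.1.le hx.2.le)) (sq_nonneg _)

theorem sin_le_sin_mul_sin_pi_div_mul {φ u : ℝ} (hφ₀ : 0 < φ) (hφ : φ ≤ π / 2) (hu₀ : 0 ≤ u)
    (hu : u ≤ φ) : sin u ≤ sin φ * sin (π / (2 * φ) * u) := by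
  have h := monotoneOn_sin_mul_div_sin (div_nonneg hu₀ hφ₀.le) ((div_le_one hφ₀).2 hu)
    ⟨hφ₀, by linarith [pi_pos]⟩ ⟨by linarith, by linarith [pi_pos]⟩ hφ
  have hsin : 0 < sin φ := sin_pos_of_pos_of_lt_pi hφ₀ (by linarith [pi_pos])
  simp only [sin_pi_div_two, div_one, div_mul_cancel₀ u hφ₀.ne'] at h
  rw [div_le_iff₀ hsin, mul_comm] at h
  rwa [show π / (2 * φ) * u = u / φ * (π / 2) by field_simp]

theorem one_sub_cos_le_sin_sq_mul_one_sub_cos {φ s : ℝ} (hφ₀ : 0 < φ) (hφ : φ ≤ π / 2)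
    (hs : |s| ≤ 2 * φ) : 1 - cos s ≤ sin φ ^ 2 * (1 - cos (π / (2 * φ) * s)) := by
  wlog hs₀ : 0 ≤ s generalizing s
  · simpa using this (s := -s) (by rwa [abs_neg]) (by linarith)
  rw [abs_of_nonneg hs₀] at hs
  have half (x : ℝ) : 1 - cos x = 2 * sin (x / 2) ^ 2 := by
    rw [sin_sq_eq_half_sub, mul_div_cancel₀ x two_ne_zero]; ring
  have hsin : sin (s / 2) ^ 2 ≤ (sin φ * sin (π / (2 * φ) * (s / 2))) ^ 2 :=
    pow_le_pow_left₀ (sin_nonneg_of_nonneg_of_le_pi (by linarith) (by linarith))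
      (sin_le_sin_mul_sin_pi_div_mul hφ₀ hφ (by linarith) (by linarith)) 2
  rw [half, half, mul_div_assoc]
  linarith

theorem cos_mul_cos_add_sin_mul_sin_mul_eq (a b g : ℝ) :
    cos a * cos b + sin a * sin b * g =
      (1 + g) / 2 * cos (a - b) + (1 - g) / 2 * cos (a + b) := by
  rw [cos_sub, cos_add]; ring

theorem one_sub_cos_law_le {φ a b g : ℝ} (hφ₀ : 0 < φ) (hφ : φ ≤ π / 2) (ha : a ∈ Icc 0 φ)
    (hb : b ∈ Icc 0 φ) (hg : |g| ≤ 1) :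
    1 - (cos a * cos b + sin a * sin b * g) ≤
      sin φ ^ 2 * (1 - (cos (π / (2 * φ) * a) * cos (π / (2 * φ) * b) +
        sin (π / (2 * φ) * a) * sin (π / (2 * φ) * b) * g)) := by
  obtain ⟨ha₀, haφ⟩ := ha
  obtain ⟨hb₀, hbφ⟩ := hb
  obtain ⟨hg₁, hg₂⟩ := abs_le.1 hg
  have hsub := one_sub_cos_le_sin_sq_mul_one_sub_cos hφ₀ hφ (s := a - b)
    (abs_le.2 ⟨by linarith, by linarith⟩)
  have hadd := one_sub_cos_le_sin_sq_mul_one_sub_cos hφ₀ hφ (s := a + b)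
    (abs_le.2 ⟨by linarith, by linarith⟩)
  simp only [cos_mul_cos_add_sin_mul_sin_mul_eq, ← mul_sub, ← mul_add]
  linarith [mul_le_mul_of_nonneg_left hsub (show 0 ≤ (1 + g) / 2 by linarith),
    mul_le_mul_of_nonneg_left hadd (show 0 ≤ (1 - g) / 2 by linarith)]

theorem le_cos_of_le_arccos {x θ : ℝ} (hθ : 0 < θ) (h : θ ≤ arccos x) : x ≤ cos θ := by
  rcases le_total x (-1) with hx | hx
  · exact hx.trans (neg_one_le_cos θ)
  · have hx₁ : x < 1 := arccos_pos.1 (hθ.trans_le h)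
    simpa only [cos_arccos hx hx₁.le] using
      cos_le_cos_of_nonneg_of_le_pi hθ.le (arccos_le_pi x) h

theorem omega2_pos {θ α β : ℝ} (hα : 0 < sin α) (hβ : 0 < sin β) (h : cos θ < cos (α - β)) :
    0 < omega2 θ α β := by
  rw [omega2, arccos_pos, div_lt_one (mul_pos hα hβ)]
  linarith [cos_sub α β]

theorem cos_le_cos_law_omega2 {θ α β : ℝ} (hα : 0 < sin α) (hβ : 0 < sin β)
    (h : 0 < omega2 θ α β) :
    cos θ ≤ cos α * cos β + sin α * sin β * cos (omega2 θ α β) := by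
  have := le_cos_of_le_arccos h le_rfl
  rw [div_le_iff₀' (mul_pos hα hβ)] at this
  linarith

theorem omega1_pos {θ φ : ℝ} (hφ : 0 < sin φ) (hθ : 0 < θ) (hθπ : θ ≤ π) : 0 < omega1 θ φ := by
  refine omega2_pos hφ hφ ?_
  rw [sub_self]
  exact cos_lt_cos_of_nonneg_of_le_pi le_rfl hθπ hθ

theorem sin_sq_mul_one_sub_cos_omega1_le {θ φ : ℝ} (hφ : 0 < sin φ) (h : 0 < omega1 θ φ) :
    sin φ ^ 2 * (1 - cos (omega1 θ φ)) ≤ 1 - cos θ := by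
  have := cos_le_cos_law_omega2 hφ hφ h
  rw [omega1]
  linarith [sin_sq_add_cos_sq φ]

theorem omega1_lt_pi {θ φ : ℝ} (hφ : 0 < sin φ) (h : cos (2 * φ) < cos θ) :
    omega1 θ φ < π := by
  rw [omega1, omega2, arccos_lt_pi, lt_div_iff₀ (mul_pos hφ hφ)]
  linarith [cos_two_mul' φ]

-- Stretching an arc of length `2 φ ω₁ / π` by the factor `π / (2 φ)` gives an arc of length `ω₁`.
theorem two_mul_mul_omega1_div_pi_le {θ φ : ℝ} (hφ₀ : 0 < φ) (hφ : φ ≤ π / 2) (hθ : 0 < θ)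
    (hθπ : θ ≤ π) : 2 * φ * (omega1 θ φ / π) ≤ θ := by
  have hsin : 0 < sin φ := sin_pos_of_pos_of_lt_pi hφ₀ (by linarith [pi_pos])
  have hω : 0 < omega1 θ φ := omega1_pos hsin hθ hθπ
  have hs₀ : 0 ≤ 2 * φ * (omega1 θ φ / π) := by positivity
  have hs : 2 * φ * (omega1 θ φ / π) ≤ 2 * φ :=
    mul_le_of_le_one_right (by positivity) ((div_le_one pi_pos).2 (arccos_le_pi _))
  have h := one_sub_cos_le_sin_sq_mul_one_sub_cos hφ₀ hφ ((abs_of_nonneg hs₀).trans_le hs)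
  rw [show π / (2 * φ) * (2 * φ * (omega1 θ φ / π)) = omega1 θ φ by field_simp] at h
  refine (strictAntiOn_cos.le_iff_ge ⟨hθ.le, hθπ⟩ ⟨hs₀, by linarith⟩).1 ?_
  linarith [sin_sq_mul_one_sub_cos_omega1_le hsin hω]

variable {E : Type*} [NormedAddCommGroup E] [InnerProductSpace ℝ E] {e x y : E}

theorem abs_real_inner_le_one (hx : ‖x‖ ≤ 1) (hy : ‖y‖ ≤ 1) : |⟪x, y⟫| ≤ 1 :=
  (abs_real_inner_le_norm x y).trans (mul_le_one₀ hx (norm_nonneg y) hy)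

theorem cos_arccos_inner (hx : ‖x‖ = 1) (hy : ‖y‖ = 1) : cos (arccos ⟪x, y⟫) = ⟪x, y⟫ :=
  have h := abs_le.1 (abs_real_inner_le_one hx.le hy.le)
  cos_arccos h.1 h.2

theorem two_div_pi_mul_arccos_inner_le_dist (hx : ‖x‖ = 1) (hy : ‖y‖ = 1) :
    2 / π * arccos ⟪x, y⟫ ≤ dist x y := by
  have hα₀ := arccos_nonneg ⟪x, y⟫
  have hcos := cos_le_one_sub_mul_cos_sq (abs_le.2 ⟨by linarith [pi_pos], arccos_le_pi ⟪x, y⟫⟩)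
  have hdist : dist x y ^ 2 = 2 - 2 * ⟪x, y⟫ := by
    rw [dist_eq_norm, norm_sub_sq_real, hx, hy]; ring
  rw [cos_arccos_inner hx hy] at hcos
  refine (sq_le_sq₀ (by positivity) dist_nonneg).1 ?_
  calc (2 / π * arccos ⟪x, y⟫) ^ 2 = 2 * (2 / π ^ 2 * arccos ⟪x, y⟫ ^ 2) := by ring
    _ ≤ dist x y ^ 2 := by rw [hdist]; linarith

theorem exists_card_le_of_pairwise_le_dist {X : Type*} [PseudoMetricSpace X] {s : Set X}
    (hs : TotallyBounded s) {δ : ℝ} (hδ : 0 < δ) :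
    ∃ N : ℕ, ∀ C : Finset X, ↑C ⊆ s → (C : Set X).Pairwise (δ ≤ dist · ·) → C.card ≤ N := by
  classical
  obtain ⟨t, -, ht, hst⟩ := Metric.finite_approx_of_totallyBounded hs (δ / 2) (half_pos hδ)
  refine ⟨ht.toFinset.card, fun C hCs hC => ?_⟩
  choose! f hft hf using fun x (hx : x ∈ C) => mem_iUnion₂.1 (hst (hCs hx))
  refine Finset.card_le_card_of_injOn f (fun x hx => ht.mem_toFinset.2 (hft x hx)) ?_
  intro x hx y hy hxy
  by_contra hne
  have hyf : dist y (f x) < δ / 2 := hxy ▸ hf y hy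
  linarith [hC hx hy hne, dist_triangle_right x y (f x), Metric.mem_ball.1 (hf x hx)]

theorem bddAbove_card_isCode (n : ℕ) {θ : ℝ} (hθ : 0 < θ) :
    BddAbove {M | ∃ C : Finset (EuclideanSpace ℝ (Fin n)), IsCode θ C ∧ C.card = M} := by
  have hδ : 0 < 2 / π * θ := by positivity
  obtain ⟨N, hN⟩ := exists_card_le_of_pairwise_le_dist
    (isCompact_sphere (0 : EuclideanSpace ℝ (Fin n)) 1).totallyBounded hδ
  refine ⟨N, ?_⟩
  rintro _ ⟨C, ⟨hunit, hsep⟩, rfl⟩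
  refine hN C (fun x hx => mem_sphere_zero_iff_norm.2 (hunit x hx)) fun x hx y hy hxy => ?_
  exact (mul_le_mul_of_nonneg_left (hsep x hx y hy hxy) (by positivity)).trans
    (two_div_pi_mul_arccos_inner_le_dist (hunit x hx) (hunit y hy))

theorem card_le_sphereMax [FiniteDimensional ℝ E] {n : ℕ} (hE : finrank ℝ E = n) {ω : ℝ}
    (hω₀ : 0 < ω) (hω : ω ≤ π) {ι : Type*} {J : Finset ι} {F : ι → E}
    (hF : ∀ i ∈ J, ‖F i‖ = 1) (hJ : (J : Set ι).Pairwise fun i j => ⟪F i, F j⟫ ≤ cos ω) :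
    J.card ≤ sphereMax n ω := by
  classical
  let b := (stdOrthonormalBasis ℝ E).reindex (finCongr hE)
  have hinj : InjOn (b.repr ∘ F) J := by
    refine b.repr.injective.comp_injOn fun i hi j hj hij => ?_
    by_contra hne
    have hinner : ⟪F i, F j⟫ = 1 := by rw [← hij, real_inner_self_eq_norm_sq, hF i hi, one_pow]
    linarith [hJ hi hj hne, cos_zero, cos_lt_cos_of_nonneg_of_le_pi le_rfl hω hω₀]
  refine le_csSup (bddAbove_card_isCode n hω₀)
    ⟨J.image (b.repr ∘ F), ⟨?_, ?_⟩, Finset.card_image_of_injOn hinj⟩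
  · simpa only [Finset.forall_mem_image, Function.comp_apply, b.repr.norm_map] using hF
  · simp only [Finset.forall_mem_image, Function.comp_apply, aDist, b.repr.inner_map_map]
    intro i hi j hj hne
    rw [← arccos_cos hω₀.le hω]
    exact arccos_le_arccos (hJ hi hj fun h => hne (by rw [h]))

theorem inner_reflection_orthogonal_singleton (he : ‖e‖ = 1) (x y : E) :
    ⟪x, (ℝ ∙ e)ᗮ.reflection y⟫ = ⟪x, y⟫ - 2 * (⟪x, e⟫ * ⟪y, e⟫) := by
  rw [Submodule.reflection_orthogonal_apply, Submodule.reflection_singleton_apply, he,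
    real_inner_comm e y]
  simp only [RCLike.ofReal_real_eq_id, id_eq, one_pow, div_one, two_smul, neg_sub,
    inner_sub_right, inner_add_right, real_inner_smul_right]
  ring

theorem card_add_card_le_sphereMax [FiniteDimensional ℝ E] {n : ℕ} (hE : finrank ℝ E = n)
    (he : ‖e‖ = 1) {ω : ℝ} (hω₀ : 0 < ω) (hω : ω ≤ π) {ι : Type*} {I J : Finset ι} {F : ι → E}
    (hIJ : I ⊆ J) (hF : ∀ i ∈ J, ‖F i‖ = 1)
    (hJ : (J : Set ι).Pairwise fun i j => ⟪F i, F j⟫ ≤ cos ω)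
    (hpole : ∀ i ∈ J, 0 ≤ ⟪F i, e⟫) (hI : ∀ i ∈ I, 1 - 2 * ⟪F i, e⟫ ^ 2 ≤ cos ω) :
    J.card + I.card ≤ sphereMax n ω := by
  set R := (ℝ ∙ e)ᗮ.reflection
  have hmirror {i j : ι} (hi : i ∈ J) (hj : j ∈ I) : ⟪F i, R (F j)⟫ ≤ cos ω := by
    rw [inner_reflection_orthogonal_singleton he]
    by_cases hij : i = j
    · subst hij
      rw [real_inner_self_eq_norm_sq, hF i hi]
      linarith [hI i hj]
    · linarith [hJ hi (hIJ hj) hij, mul_nonneg (hpole i hi) (hpole j (hIJ hj))]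
  rw [← Finset.card_disjSum]
  refine card_le_sphereMax hE hω₀ hω (F := Sum.elim F (R ∘ F)) ?_ ?_
  · rintro (i | i) hi
    · exact hF i (Finset.inl_mem_disjSum.1 hi)
    · exact (R.norm_map _).trans (hF i (hIJ (Finset.inr_mem_disjSum.1 hi)))
  · rintro (i | i) hi (j | j) hj hij <;>
      simp only [Finset.mem_coe, Finset.inl_mem_disjSum, Finset.inr_mem_disjSum] at hi hj <;>
      simp only [Sum.elim_inl, Sum.elim_inr, Function.comp_apply]
    · exact hJ hi hj (ne_of_apply_ne _ hij)
    · exact hmirror hi hj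
    · rw [real_inner_comm]
      exact hmirror hj hi
    · rw [R.inner_map_map]
      exact hJ (hIJ hi) (hIJ hj) (ne_of_apply_ne _ hij)

/-- The point at angular distance `r` from the pole `e` in the direction `u`, for unit vectors `e`
and `u ⟂ e`. -/
noncomputable def polarPoint (e : E) (r : ℝ) (u : (ℝ ∙ e)ᗮ) : E := cos r • e + sin r • (u : E)

/-- The direction from the pole `e` towards `x`: the normalized projection of `x` onto the
hyperplane orthogonal to `e`. It is `0` when `x` is a multiple of `e`. -/
noncomputable def azimuth (e x : E) : (ℝ ∙ e)ᗮ :=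
  NormedSpace.normalize ((ℝ ∙ e)ᗮ.orthogonalProjectionOnto x)

theorem inner_polarPoint (he : ‖e‖ = 1) (r s : ℝ) (u v : (ℝ ∙ e)ᗮ) :
    ⟪polarPoint e r u, polarPoint e s v⟫ = cos r * cos s + sin r * sin s * ⟪u, v⟫ := by
  have hu : ⟪(u : E), e⟫ = 0 := Submodule.mem_orthogonal_singleton_iff_inner_left.1 u.2
  have hv : ⟪e, (v : E)⟫ = 0 := Submodule.mem_orthogonal_singleton_iff_inner_right.1 v.2
  simp only [polarPoint, inner_add_left, inner_add_right, real_inner_smul_left,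
    real_inner_smul_right, hu, hv, real_inner_self_eq_norm_sq, he, Submodule.coe_inner]
  ring

theorem inner_polarPoint_pole (he : ‖e‖ = 1) (r : ℝ) (u : (ℝ ∙ e)ᗮ) :
    ⟪polarPoint e r u, e⟫ = cos r := by
  simpa [polarPoint] using inner_polarPoint he r 0 u 0

theorem norm_azimuth_le_one (e x : E) : ‖azimuth e x‖ ≤ 1 := by
  rw [azimuth]
  by_cases h : (ℝ ∙ e)ᗮ.orthogonalProjectionOnto x = 0
  · rw [h, NormedSpace.normalize_zero_eq_zero, norm_zero]
    exact zero_le_one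
  · exact (NormedSpace.norm_normalize h).le

theorem sin_arccos_inner (he : ‖e‖ = 1) (hx : ‖x‖ = 1) :
    sin (arccos ⟪x, e⟫) = ‖(ℝ ∙ e)ᗮ.orthogonalProjectionOnto x‖ := by
  have h := Submodule.norm_sq_eq_add_norm_sq_projection x (ℝ ∙ e)
  rw [Submodule.coe_norm, Submodule.coe_orthogonalProjectionOnto_apply,
    Submodule.starProjection_unit_singleton ℝ he, norm_smul, he, hx, mul_one, norm_eq_abs,
    sq_abs, real_inner_comm, one_pow] at h
  rw [sin_arccos, h, add_sub_cancel_left, sqrt_sq (norm_nonneg _)]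

theorem norm_azimuth (he : ‖e‖ = 1) (hx : ‖x‖ = 1) (h : sin (arccos ⟪x, e⟫) ≠ 0) :
    ‖azimuth e x‖ = 1 := by
  rw [sin_arccos_inner he hx, norm_ne_zero_iff] at h
  exact NormedSpace.norm_normalize h

theorem polarPoint_azimuth (he : ‖e‖ = 1) (hx : ‖x‖ = 1) :
    polarPoint e (arccos ⟪x, e⟫) (azimuth e x) = x := by
  rw [polarPoint, cos_arccos_inner hx he, sin_arccos_inner he hx, azimuth, ← Submodule.coe_smul,
    NormedSpace.norm_smul_normalize, real_inner_comm,
    ← Submodule.starProjection_unit_singleton ℝ he]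
  exact Submodule.starProjection_add_starProjection_orthogonal _

theorem inner_eq_cos_law (he : ‖e‖ = 1) (hx : ‖x‖ = 1) (hy : ‖y‖ = 1) :
    ⟪x, y⟫ = cos (arccos ⟪x, e⟫) * cos (arccos ⟪y, e⟫) +
      sin (arccos ⟪x, e⟫) * sin (arccos ⟪y, e⟫) * ⟪azimuth e x, azimuth e y⟫ := by
  rw [← inner_polarPoint he, polarPoint_azimuth he hx, polarPoint_azimuth he hy]

theorem finrank_orthogonal_singleton [FiniteDimensional ℝ E] (he : e ≠ 0) :
    finrank ℝ (ℝ ∙ e)ᗮ = finrank ℝ E - 1 := by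
  have h := (ℝ ∙ e).finrank_add_finrank_orthogonal
  rw [finrank_span_singleton he] at h
  lia

theorem card_le_sphereMax_of_strip [FiniteDimensional ℝ E] (he : ‖e‖ = 1) {c ψ φ ω : ℝ}
    (hψ : 0 < ψ) (hφ : φ ≤ π / 2) (hω₀ : 0 < ω) (hω : ω ≤ π)
    (hφφ : c ≤ cos φ * cos φ + sin φ * sin φ * cos ω)
    (hφψ : c ≤ cos φ * cos ψ + sin φ * sin ψ * cos ω)
    {C : Finset E} (hC : ∀ x ∈ C, ‖x‖ = 1) (hsep : (C : Set E).Pairwise fun x y => ⟪x, y⟫ ≤ c)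
    (hstrip : ∀ x ∈ C, arccos ⟪x, e⟫ ∈ Icc ψ φ) :
    C.card ≤ sphereMax (finrank ℝ E - 1) ω := by
  have hsin {x : E} (hx : x ∈ C) : 0 < sin (arccos ⟪x, e⟫) :=
    sin_pos_of_pos_of_lt_pi (hψ.trans_le (hstrip x hx).1)
      (by linarith [(hstrip x hx).2, pi_pos])
  have hazimuth : (C : Set E).Pairwise fun x y => ⟪azimuth e x, azimuth e y⟫ ≤ cos ω := by
    intro x hx y hy hxy
    have hlower := le_cos_mul_cos_add_sin_mul_sin_mul_of_corners hψ.le hφ (cos_le_one ω) hφφ hφψ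
      (hstrip x hx) (hstrip y hy)
    have hupper : ⟪x, y⟫ ≤ c := hsep hx hy hxy
    rw [inner_eq_cos_law he (hC x hx) (hC y hy)] at hupper
    exact le_of_mul_le_mul_left (by linarith) (mul_pos (hsin hx) (hsin hy))
  have he₀ : e ≠ 0 := norm_ne_zero_iff.1 (by rw [he]; exact one_ne_zero)
  exact card_le_sphereMax (finrank_orthogonal_singleton he₀) hω₀ hω
    (fun x hx => norm_azimuth he (hC x hx) (hsin hx).ne') hazimuth

/-- The radial stretching of the cap of angular radius `φ` about `e` onto the closed hemisphere,
which multiplies the angular distance to `e` by `π / (2 φ)` and preserves the azimuth. -/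
noncomputable def stretch (φ : ℝ) (e x : E) : E :=
  polarPoint e (π / (2 * φ) * arccos ⟪x, e⟫) (azimuth e x)

theorem norm_stretch {φ : ℝ} (he : ‖e‖ = 1) (hx : ‖x‖ = 1) (h : arccos ⟪x, e⟫ < π) :
    ‖stretch φ e x‖ = 1 := by
  refine (pow_eq_one_iff_of_nonneg (norm_nonneg _) two_ne_zero).1 ?_
  rw [← real_inner_self_eq_norm_sq, stretch, inner_polarPoint he, real_inner_self_eq_norm_sq]
  rcases (arccos_nonneg ⟪x, e⟫).eq_or_lt with h₀ | h₀
  · simp [← h₀]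
  · rw [norm_azimuth he hx (sin_pos_of_pos_of_lt_pi h₀ h).ne']
    linarith [sin_sq_add_cos_sq (π / (2 * φ) * arccos ⟪x, e⟫)]

theorem one_sub_inner_le_one_sub_inner_stretch {φ : ℝ} (hφ₀ : 0 < φ) (hφ : φ ≤ π / 2)
    (he : ‖e‖ = 1) (hx : ‖x‖ = 1) (hy : ‖y‖ = 1) (hxφ : arccos ⟪x, e⟫ ≤ φ)
    (hyφ : arccos ⟪y, e⟫ ≤ φ) :
    1 - ⟪x, y⟫ ≤ sin φ ^ 2 * (1 - ⟪stretch φ e x, stretch φ e y⟫) := by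
  rw [inner_eq_cos_law he hx hy, stretch, stretch, inner_polarPoint he]
  exact one_sub_cos_law_le hφ₀ hφ ⟨arccos_nonneg _, hxφ⟩ ⟨arccos_nonneg _, hyφ⟩
    (abs_real_inner_le_one (norm_azimuth_le_one e x) (norm_azimuth_le_one e y))

theorem inner_stretch_pole (φ : ℝ) (he : ‖e‖ = 1) (x : E) :
    ⟪stretch φ e x, e⟫ = cos (π / (2 * φ) * arccos ⟪x, e⟫) :=
  inner_polarPoint_pole he _ _

theorem card_add_card_le_sphereMax_of_cap [FiniteDimensional ℝ E] {n : ℕ}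
    (hE : finrank ℝ E = n) (he : ‖e‖ = 1) {c φ ω : ℝ} (hφ₀ : 0 < φ) (hφ : φ ≤ π / 2)
    (hω₀ : 0 < ω) (hω : ω ≤ π) (hc : sin φ ^ 2 * (1 - cos ω) ≤ 1 - c) {C I : Finset E}
    (hC : ∀ x ∈ C, ‖x‖ = 1) (hsep : (C : Set E).Pairwise fun x y => ⟪x, y⟫ ≤ c)
    (hcap : ∀ x ∈ C, arccos ⟪x, e⟫ ≤ φ) (hIC : I ⊆ C)
    (hI : ∀ x ∈ I, arccos ⟪x, e⟫ ≤ φ * (1 - ω / π)) :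
    C.card + I.card ≤ sphereMax n ω := by
  have hsin : 0 < sin φ := sin_pos_of_pos_of_lt_pi hφ₀ (by linarith [pi_pos])
  have hk : 0 < π / (2 * φ) := by positivity
  have hr (x : E) : 0 ≤ π / (2 * φ) * arccos ⟪x, e⟫ := mul_nonneg hk.le (arccos_nonneg _)
  refine card_add_card_le_sphereMax hE he hω₀ hω (F := stretch φ e) hIC
    (fun x hx => norm_stretch he (hC x hx) (by linarith [hcap x hx, pi_pos])) ?_ ?_ ?_
  · intro x hx y hy hxy
    have h := one_sub_inner_le_one_sub_inner_stretch hφ₀ hφ he (hC x hx) (hC y hy) (hcap x hx)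
      (hcap y hy)
    have : 1 - cos ω ≤ 1 - ⟪stretch φ e x, stretch φ e y⟫ :=
      le_of_mul_le_mul_left (by linarith [hsep hx hy hxy]) (pow_pos hsin 2)
    linarith
  · intro x hx
    have h := mul_le_mul_of_nonneg_left (hcap x hx) hk.le
    rw [show π / (2 * φ) * φ = π / 2 by field_simp] at h
    rw [inner_stretch_pole φ he]
    exact cos_nonneg_of_neg_pi_div_two_le_of_le (by linarith [hr x, pi_pos]) h
  · intro x hx
    have h := mul_le_mul_of_nonneg_left (hI x hx) hk.le
    rw [show π / (2 * φ) * (φ * (1 - ω / π)) = (π - ω) / 2 by field_simp] at h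
    calc 1 - 2 * ⟪stretch φ e x, e⟫ ^ 2
        = cos (π - 2 * (π / (2 * φ) * arccos ⟪x, e⟫)) := by
          rw [inner_stretch_pole φ he, cos_pi_sub, cos_two_mul]; ring
      _ ≤ cos ω := cos_le_cos_of_nonneg_of_le_pi hω₀.le (by linarith [hr x]) (by linarith)

theorem card_le_sphereMax_min_omega1_omega2 [FiniteDimensional ℝ E] (he : ‖e‖ = 1)
    {θ φ ψ : ℝ} (hψ : 0 < ψ) (hψφ : ψ ≤ φ) (hφ : φ ≤ π / 2) (hθ : φ - ψ < θ) (hθ₀ : 0 < θ)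
    (hθπ : θ ≤ π) {C : Finset E} (hC : ∀ x ∈ C, ‖x‖ = 1)
    (hsep : (C : Set E).Pairwise fun x y => ⟪x, y⟫ ≤ cos θ)
    (hstrip : ∀ x ∈ C, arccos ⟪x, e⟫ ∈ Icc ψ φ) :
    C.card ≤ sphereMax (finrank ℝ E - 1) (min (omega1 θ φ) (omega2 θ φ ψ)) := by
  have hsinφ : 0 < sin φ := sin_pos_of_pos_of_lt_pi (hψ.trans_le hψφ) (by linarith [pi_pos])
  have hsinψ : 0 < sin ψ := sin_pos_of_pos_of_lt_pi hψ (by linarith [pi_pos])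
  have hω₁ : 0 < omega1 θ φ := omega1_pos hsinφ hθ₀ hθπ
  have hω₂ : 0 < omega2 θ φ ψ := omega2_pos hsinφ hsinψ
    (cos_lt_cos_of_nonneg_of_le_pi (sub_nonneg.2 hψφ) hθπ hθ)
  have hω : 0 < min (omega1 θ φ) (omega2 θ φ ψ) := lt_min hω₁ hω₂
  refine card_le_sphereMax_of_strip he hψ hφ hω (min_le_of_left_le (arccos_le_pi _))
    ((cos_le_cos_law_omega2 hsinφ hsinφ hω₁).trans ?_)
    ((cos_le_cos_law_omega2 hsinφ hsinψ hω₂).trans ?_) hC hsep hstrip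
  · gcongr
    exact cos_le_cos_of_nonneg_of_le_pi hω.le (arccos_le_pi _) (min_le_left _ _)
  · gcongr
    exact cos_le_cos_of_nonneg_of_le_pi hω.le (arccos_le_pi _) (min_le_right _ _)

-- For `φ + ψ < θ` the argument of `arccos` in `omega2 θ φ ψ` is below `-1`, so `omega2 θ φ ψ = π`.
theorem stmt18_general [FiniteDimensional ℝ E] {n : ℕ} (hE : finrank ℝ E = n) (he : ‖e‖ = 1)
    {θ φ ψ : ℝ} (hφ : φ ≤ π / 2) (hθ : 0 < θ) (hθφ : θ < 2 * φ)
    (hψ : ψ = φ * (1 - omega1 θ φ / π)) {C : Finset E} (hC : ∀ x ∈ C, ‖x‖ = 1)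
    (hsep : (C : Set E).Pairwise fun x y => θ ≤ arccos ⟪x, y⟫)
    (hcap : ∀ x ∈ C, arccos ⟪x, e⟫ ≤ φ) :
    (C.filter fun x => ψ ≤ arccos ⟪x, e⟫ ∧ arccos ⟪x, e⟫ ≤ φ).card ≤
        sphereMax (n - 1) (min (omega1 θ φ) (omega2 θ φ ψ)) ∧
      (C.filter fun x => ψ ≤ arccos ⟪x, e⟫ ∧ arccos ⟪x, e⟫ ≤ φ).card +
          2 * (C.filter fun x => arccos ⟪x, e⟫ < ψ).card ≤
        sphereMax n (omega1 θ φ) := by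
  have hφ₀ : 0 < φ := by linarith
  have hθπ : θ ≤ π := by linarith
  have hsin : 0 < sin φ := sin_pos_of_pos_of_lt_pi hφ₀ (by linarith [pi_pos])
  have hω : 0 < omega1 θ φ := omega1_pos hsin hθ hθπ
  have hsep_inner : (C : Set E).Pairwise fun x y => ⟪x, y⟫ ≤ cos θ :=
    hsep.imp fun _ _ h => le_cos_of_le_arccos hθ h
  constructor
  · have hψ₀ : 0 < ψ := hψ ▸ mul_pos hφ₀ (sub_pos.2 ((div_lt_one pi_pos).2
      (omega1_lt_pi hsin (cos_lt_cos_of_nonneg_of_le_pi hθ.le (by linarith) hθφ))))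
    have hψφ : ψ ≤ φ := hψ ▸ mul_le_of_le_one_right hφ₀.le (sub_le_self 1 (by positivity))
    have hθψ : 2 * (φ - ψ) ≤ θ := by
      rw [hψ]
      linarith [two_mul_mul_omega1_div_pi_le hφ₀ hφ hθ hθπ]
    rw [← hE]
    exact card_le_sphereMax_min_omega1_omega2 he hψ₀ hψφ hφ (by linarith) hθ hθπ
      (fun x hx => hC x (Finset.mem_of_mem_filter x hx))
      (hsep_inner.mono (Finset.coe_subset.2 (Finset.filter_subset _ C)))
      fun x hx => (Finset.mem_filter.1 hx).2
  · have hstrip : (C.filter fun x => ψ ≤ arccos ⟪x, e⟫ ∧ arccos ⟪x, e⟫ ≤ φ) =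
        C.filter fun x => ¬ arccos ⟪x, e⟫ < ψ :=
      Finset.filter_congr fun x hx => by rw [not_lt, and_iff_left (hcap x hx)]
    have hcard := card_add_card_le_sphereMax_of_cap hE he hφ₀ hφ hω (arccos_le_pi _)
      (sin_sq_mul_one_sub_cos_omega1_le hsin hω) hC hsep_inner hcap
      (Finset.filter_subset (fun x => arccos ⟪x, e⟫ < ψ) C)
      fun x hx => hψ ▸ (Finset.mem_filter.1 hx).2.le
    have hsplit := C.card_filter_add_card_filter_not fun x => arccos ⟪x, e⟫ < ψ
    rw [hstrip]
    lia

theorem norm_north {n : ℕ} (hn : 0 < n) : ‖north n‖ = 1 := by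
  simp [north, hn]

end

open Classical in
theorem stmt18 (n : ℕ) (hn : 3 ≤ n) (θ φ : ℝ) (hφ : 0 < φ) (hφ2 : φ ≤ Real.pi / 2)
    (hθ : 0 < θ) (hθ2 : θ < 2 * φ) (ψ : ℝ) (hψ : ψ = φ * (1 - omega1 θ φ / Real.pi))
    (hlo : φ - ψ ≤ θ) (hhi : θ ≤ φ + ψ)
    (C : Finset (EuclideanSpace ℝ (Fin n))) (hC : IsCode θ C)
    (hCap : ∀ x ∈ C, aDist x (north n) ≤ φ) :
    (C.filter fun x => ψ ≤ aDist x (north n) ∧ aDist x (north n) ≤ φ).card ≤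
        sphereMax (n - 1) (min (omega1 θ φ) (omega2 θ φ ψ)) ∧
      (C.filter fun x => ψ ≤ aDist x (north n) ∧ aDist x (north n) ≤ φ).card +
          2 * (C.filter fun x => aDist x (north n) < ψ).card ≤
        sphereMax n (omega1 θ φ) :=
  stmt18_general finrank_euclideanSpace_fin (norm_north (by lia)) hφ2 hθ hθ2 hψ hC.1
    (fun x hx y hy => hC.2 x hx y hy) hCap
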